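/- Let α ∈ D and let γ be a monomial with α + γ ∈ ⟨𝓕⟩. Then the monomial c_{4n} s_n does not divide γ. -/

import Mathlib

open MvPolynomial

/-- Monomials in the variables `σ`, represented by their exponent vectors. -/
abbrev Mon (σ : Type*) := σ →₀ ℕ

/-- A monomial order: a total order on monomials such that `1 ≼ t` for every monomial `t`
and `t ≼ u → t·v ≼ u·v` (written additively on exponent vectors). -/
structure MonOrd (σ : Type*) where
  le : Mon σ → Mon σ → Prop
  le_refl : ∀ t, le t t
  le_trans : ∀ t u v, le t u → le u v → le t v
  le_antisymm : ∀ t u, le t u → le u t → t = u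
  le_total : ∀ t u, le t u ∨ le u t
  zero_le : ∀ t, le 0 t
  add_le_add : ∀ t u v, le t u → le (t + v) (u + v)

/-- Strict version of a monomial order. -/
def MonOrd.lt {σ : Type*} (μ : MonOrd σ) (t u : Mon σ) : Prop := μ.le t u ∧ t ≠ u

/-- The extension of a monomial order (given by the relation `r` on monomials) to polynomials:
`g ≼ f` iff `g = f` or the greatest monomial on which `f` and `g` differ occurs in `f`.
(This is the closed form of the recursive definition: `g ≼ f` iff `g = f`, or
`HT g ≺ HT f`, or `HT g = HT f` and `g - HT g ≼ f - HT f`, with `0` the least polynomial.) -/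
def polyLe {σ : Type*} (r : Mon σ → Mon σ → Prop) (g f : MvPolynomial σ (ZMod 2)) : Prop :=
  g = f ∨ ∃ t, t ∈ f.support ∧ t ∉ g.support ∧
    ∀ u : Mon σ, ((u ∈ f.support ∧ u ∉ g.support) ∨ (u ∈ g.support ∧ u ∉ f.support)) → r u t

/-- Strict extension of a monomial order to polynomials. -/
def polyLt {σ : Type*} (r : Mon σ → Mon σ → Prop) (g f : MvPolynomial σ (ZMod 2)) : Prop :=
  polyLe r g f ∧ g ≠ f

/-- `S_F`: the set of non-residual polynomials with respect to `F` and the monomial order `r`,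
i.e. those `f` admitting a `g` with `f + g ∈ ⟨F⟩` and `g ≺ f`. -/
def SF {σ : Type*} (r : Mon σ → Mon σ → Prop) (F : Set (MvPolynomial σ (ZMod 2))) :
    Set (MvPolynomial σ (ZMod 2)) :=
  {f | ∃ g, f + g ∈ Ideal.span F ∧ polyLt r g f}

/-- `t` is the head monomial (`r`-greatest monomial) of the polynomial `f`. -/
def IsHT {σ : Type*} (r : Mon σ → Mon σ → Prop) (f : MvPolynomial σ (ZMod 2)) (t : Mon σ) :
    Prop :=
  t ∈ f.support ∧ ∀ u ∈ f.support, r u t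

/-- `HT(S)`: the set of head monomials (as polynomials) of the nonzero elements of `S`. -/
def HTset {σ : Type*} (r : Mon σ → Mon σ → Prop) (S : Set (MvPolynomial σ (ZMod 2))) :
    Set (MvPolynomial σ (ZMod 2)) :=
  {p | ∃ f ∈ S, f ≠ 0 ∧ ∃ t, IsHT r f t ∧ p = monomial t 1}

/-- The divisibility (componentwise) order `◁` on monomials. -/
def triMon {σ : Type*} (t u : Mon σ) : Prop := ∀ x, t x ≤ u x

/-- The order `◁` on polynomials: `p ◁ q` iff there is an injective map `φ` from the
monomials of `p` to the monomials of `q` with `t ◁ φ t` for each monomial `t` of `p`. -/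
def triPoly {σ : Type*} (p q : MvPolynomial σ (ZMod 2)) : Prop :=
  ∃ φ : Mon σ → Mon σ, Set.InjOn φ ↑p.support ∧ ∀ t ∈ p.support, φ t ∈ q.support ∧ triMon t (φ t)

/-- Upward closure with respect to `◁`. -/
def upClo {σ : Type*} (A : Set (MvPolynomial σ (ZMod 2))) : Set (MvPolynomial σ (ZMod 2)) :=
  {q | ∃ p ∈ A, triPoly p q}

/-- `Min_◁(A)`: the `◁`-minimal elements of `A`. -/
def minTri {σ : Type*} (A : Set (MvPolynomial σ (ZMod 2))) : Set (MvPolynomial σ (ZMod 2)) :=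
  {p | p ∈ A ∧ ∀ q ∈ A, triPoly q p → q = p}

/-- `G` is a Gröbner basis of the ideal `I` with respect to the monomial order `r`. -/
def IsGB {σ : Type*} (r : Mon σ → Mon σ → Prop) (G : Finset (MvPolynomial σ (ZMod 2)))
    (I : Ideal (MvPolynomial σ (ZMod 2))) : Prop :=
  (↑G : Set (MvPolynomial σ (ZMod 2))) ⊆ ↑I ∧
    Ideal.span (↑G : Set (MvPolynomial σ (ZMod 2))) = I ∧
    Ideal.span (HTset r (↑I : Set (MvPolynomial σ (ZMod 2)))) = Ideal.span (HTset r ↑G)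

/-- `G` is a reduced Gröbner basis of `I` with respect to `r`. -/
def IsReducedGB {σ : Type*} (r : Mon σ → Mon σ → Prop) (G : Finset (MvPolynomial σ (ZMod 2)))
    (I : Ideal (MvPolynomial σ (ZMod 2))) : Prop :=
  IsGB r G I ∧ ∀ f ∈ G, ¬ ∀ t ∈ f.support,
    (monomial t 1 : MvPolynomial σ (ZMod 2)) ∈
      Ideal.span (HTset r ((↑G : Set (MvPolynomial σ (ZMod 2))) \ {f}))

/-- The variable set `X`: the special variables `s, ℓ, c, c̄, b, b̄` together with, for each
`0 ≤ i ≤ n`, the variables `s_i, f_i, q_{ji}, c_{ji}, b_{ji}` (`1 ≤ j ≤ 4`, encoded by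
`j : Fin 4`) and their barred copies (`bar = true`). -/
inductive MVar (n : ℕ) : Type where
  | vs | vl | vc | vcb | vb | vbb
  | vS (bar : Bool) (i : Fin (n+1))
  | vF (bar : Bool) (i : Fin (n+1))
  | vQ (bar : Bool) (j : Fin 4) (i : Fin (n+1))
  | vC (bar : Bool) (j : Fin 4) (i : Fin (n+1))
  | vB (bar : Bool) (j : Fin 4) (i : Fin (n+1))
deriving DecidableEq

open MVar

abbrev MPoly (n : ℕ) := MvPolynomial (MVar n) (ZMod 2)

/-- `e(n) = 2^(2^n)`. -/
def en (n : ℕ) : ℕ := 2 ^ 2 ^ n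

/-- The set `P_0` (barred copy if `bar = true`). -/
def P0 (n : ℕ) (bar : Bool) : Set (MPoly n) :=
  {p | ∃ j : Fin 4, p =
    X (vB bar j 0) ^ 2 * X (vC bar j 0) * X (vF bar 0) + X (vC bar j 0) * X (vS bar 0)}

/-- The set `P_m` for `m = i+1`, `i : Fin n` (barred copy if `bar = true`).
Here `i.succ` plays the role of `m` and `i.castSucc` the role of `m-1`; the indices
`1,2,3,4` of the paper are encoded as `0,1,2,3 : Fin 4`. -/
def Pm (n : ℕ) (bar : Bool) (i : Fin n) : Set (MPoly n) :=
  ({ X (vQ bar 0 i.succ) * X (vC bar 0 i.castSucc) * X (vS bar i.castSucc) + X (vS bar i.succ),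
    X (vQ bar 1 i.succ) * X (vC bar 1 i.castSucc) * X (vS bar i.castSucc)
      + X (vQ bar 0 i.succ) * X (vB bar 0 i.castSucc) * X (vC bar 0 i.castSucc)
        * X (vF bar i.castSucc),
    X (vQ bar 2 i.succ) * X (vC bar 2 i.castSucc) * X (vF bar i.castSucc)
      + X (vQ bar 1 i.succ) * X (vC bar 1 i.castSucc) * X (vF bar i.castSucc),
    X (vQ bar 2 i.succ) * X (vB bar 0 i.castSucc) * X (vC bar 2 i.castSucc)
        * X (vS bar i.castSucc)
      + X (vQ bar 1 i.succ) * X (vB bar 3 i.castSucc) * X (vC bar 1 i.castSucc)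
        * X (vS bar i.castSucc),
    X (vQ bar 3 i.succ) * X (vB bar 3 i.castSucc) * X (vC bar 3 i.castSucc)
        * X (vF bar i.castSucc)
      + X (vQ bar 2 i.succ) * X (vC bar 2 i.castSucc) * X (vS bar i.castSucc),
    X (vQ bar 3 i.succ) * X (vC bar 3 i.castSucc) * X (vS bar i.castSucc)
      + X (vF bar i.succ) } : Set (MPoly n))
  ∪ {p | ∃ j : Fin 4, p =
      X (vQ bar 1 i.succ) * X (vB bar 2 i.castSucc) * X (vB bar j i.succ) * X (vC bar j i.succ)
          * X (vF bar i.castSucc)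
        + X (vQ bar 1 i.succ) * X (vB bar 1 i.castSucc) * X (vC bar j i.succ)
          * X (vF bar i.castSucc)}

/-- The set `P = P_0 ∪ P_1 ∪ ⋯ ∪ P_n`; for `bar = true` this is the barred copy `P̄`
(the image of `P` under the substitution replacing each variable by its barred version). -/
def PP (n : ℕ) (bar : Bool) : Set (MPoly n) := P0 n bar ∪ ⋃ i : Fin n, Pm n bar i

/-- The set `G` of seven extra binomials. -/
def GG (n : ℕ) : Set (MPoly n) :=
  { X (vB false 3 (Fin.last n)) * X vl * X vb + X vl * X vc,
    X (vB false 3 (Fin.last n)) * X vl * X vbb + X vl * X vcb,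
    X (vC false 3 (Fin.last n)) * X (vF false (Fin.last n)) + X vl,
    X (vC true 3 (Fin.last n)) * X (vF true (Fin.last n))
      + X (vC false 3 (Fin.last n)) * X (vS false (Fin.last n)),
    X (vB true 3 (Fin.last n)) * X (vC false 3 (Fin.last n)) * X (vS false (Fin.last n))
      + X (vC false 3 (Fin.last n)) * X (vS false (Fin.last n)) * X vb,
    X (vB true 3 (Fin.last n)) * X (vC false 3 (Fin.last n)) * X (vS false (Fin.last n))
      + X (vC false 3 (Fin.last n)) * X (vS false (Fin.last n)) * X vbb,
    X (vC true 3 (Fin.last n)) * X (vS true (Fin.last n)) + X vs }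

/-- The set `𝓕 = P ∪ P̄ ∪ G`. -/
def FF (n : ℕ) : Set (MPoly n) := PP n false ∪ PP n true ∪ GG n

/-- The set `C = {ℓ c̄^{m1} c^{m2} : m1 + m2 = e(n)}` of monomials. -/
def Cmon (n : ℕ) : Set (Mon (MVar n)) :=
  {α | ∃ m1 m2 : ℕ, m1 + m2 = en n ∧
    α = Finsupp.single vl 1 + Finsupp.single vcb m1 + Finsupp.single vc m2}

/-- The set `D = {ℓ^j c̄^{m1} c^{m2} : j ∈ {0,1}, j + m1 + m2 ≤ e(n)}` of monomials. -/
def Dmon (n : ℕ) : Set (Mon (MVar n)) :=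
  {α | ∃ j m1 m2 : ℕ, j ≤ 1 ∧ j + m1 + m2 ≤ en n ∧
    α = Finsupp.single vl j + Finsupp.single vcb m1 + Finsupp.single vc m2}

/-- An injective rank function on the variables realizing the variable ordering
(from least to greatest): `s, c, c̄, ℓ, b, b̄`; then `s_0,…,s_n`; `f_0,…,f_n`;
`c_{10},…,c_{1n}; …; c_{40},…,c_{4n}`; `b_{10},…,b_{4n}`; `q_{10},…,q_{4n}`;
then the barred variables in the same pattern. -/
def vrank (n : ℕ) : MVar n → ℕ
  | .vs => 0
  | .vc => 1
  | .vcb => 2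
  | .vl => 3
  | .vb => 4
  | .vbb => 5
  | .vS bar i => 6 + (cond bar (14 * (n+1)) 0) + (i : ℕ)
  | .vF bar i => 6 + (cond bar (14 * (n+1)) 0) + (n+1) + (i : ℕ)
  | .vC bar j i => 6 + (cond bar (14 * (n+1)) 0) + 2*(n+1) + (j : ℕ)*(n+1) + (i : ℕ)
  | .vB bar j i => 6 + (cond bar (14 * (n+1)) 0) + 6*(n+1) + (j : ℕ)*(n+1) + (i : ℕ)
  | .vQ bar j i => 6 + (cond bar (14 * (n+1)) 0) + 10*(n+1) + (j : ℕ)*(n+1) + (i : ℕ)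

/-- The lexicographic monomial order on `X`: `t ≼_lex u` iff `t = u` or the exponents differ
somewhere and at the greatest variable (w.r.t. `vrank`) where they differ, the exponent of
`t` is smaller. -/
def lexLe (n : ℕ) (t u : Mon (MVar n)) : Prop :=
  t = u ∨ ∃ x : MVar n, t x < u x ∧ ∀ y : MVar n, vrank n x < vrank n y → t y = u y

/-- The total degree of a monomial. -/
def mdeg {σ : Type*} (t : Mon σ) : ℕ := t.sum fun _ k => k

/-- The degree lexicographic monomial order. -/
def degLexLe (n : ℕ) (t u : Mon (MVar n)) : Prop :=
  mdeg t < mdeg u ∨ (mdeg t = mdeg u ∧ lexLe n t u)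

/-- Weighted degree of a monomial with respect to a weight map `w`. -/
noncomputable def wdeg {n : ℕ} (w : MVar n → ℝ) (t : Mon (MVar n)) : ℝ :=
  t.sum fun x k => (k : ℝ) * w x

/-- The weighted monomial order determined by the weight map `w`. -/
def wLe {n : ℕ} (w : MVar n → ℝ) (t u : Mon (MVar n)) : Prop := t = u ∨ wdeg w t < wdeg w u



namespace MM

set_option linter.unusedSimpArgs false

/-- Simplified variables: `T` collects forbidden tokens, `O` the irrelevant variables. -/
inductive V : Type where
  | T | O | c | l
  | S (i : ℕ)
  | F (i : ℕ)
  | Q (j : Fin 4) (i : ℕ)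
  | C (j : Fin 4) (i : ℕ)
  | B (j : Fin 4) (i : ℕ)
deriving DecidableEq

open V

def emb (n : ℕ) : MVar n → V
  | .vs => T
  | .vl => l
  | .vc => c
  | .vcb => c
  | .vb => O
  | .vbb => O
  | .vS true _ => T
  | .vF true _ => T
  | .vQ true _ _ => O
  | .vC true _ _ => O
  | .vB true _ _ => O
  | .vS false i => S i
  | .vF false i => F i
  | .vQ false j i => Q j i
  | .vC false j i => C j i
  | .vB false j i => B j i

/-- all variables of level `< m` vanish -/
def Low (m : ℕ) (x : V →₀ ℕ) : Prop :=
  ∀ k < m, x (S k) = 0 ∧ x (F k) = 0 ∧ (∀ j, x (Q j k) = 0) ∧ (∀ j, x (C j k) = 0) ∧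
    (∀ j, x (B j k) = 0)

def Con (j : Fin 4) (β : Fin 4 → ℕ) (e t : ℕ) : Prop :=
  if j = 0 ∨ j = 3 then β 0 + β 3 = e ∧ β 1 = 0 ∧ β 2 = 0 ∧ t = e * β 0
  else β 0 + β 3 + 1 = e ∧ β 1 + β 2 = e ∧ t = β 1 + e * β 0

/-- the counters at level `m`, given the possible values of the token at level `m`. -/
def FullOf (m : ℕ) (x : V →₀ ℕ) (R : ℕ → Prop) (i : Fin 4) (β : Fin 4 → ℕ) : Prop :=
  (∀ k, x (C k m) = if k = i then 1 else 0) ∧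
    ∃ t, R t ∧ ∀ k, β k = x (B k m) + if k = i then t else 0

def TokS (m : ℕ) (x : V →₀ ℕ) : Prop :=
  x (S m) = 1 ∧ x (F m) = 0 ∧ (∀ j, x (Q j m) = 0) ∧ Low m x

def TokF (m : ℕ) (x : V →₀ ℕ) : Prop :=
  x (S m) = 0 ∧ x (F m) = 1 ∧ (∀ j, x (Q j m) = 0) ∧ Low m x

/-- The configuration `x` is valid up to level `m` with token value `t`. -/
def Tok (x : V →₀ ℕ) : ℕ → ℕ → Prop
  | 0, t => (TokS 0 x ∧ t = en 0) ∨ (TokF 0 x ∧ t = 0)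
  | m + 1, t => (TokS (m+1) x ∧ t = en (m+1)) ∨ (TokF (m+1) x ∧ t = 0) ∨
      (x (S (m+1)) = 0 ∧ x (F (m+1)) = 0 ∧
        ∃ j, (∀ k, x (Q k (m+1)) = if k = j then 1 else 0) ∧
          ∃ β, FullOf m x (fun t' => Tok x m t') j β ∧ Con j β (en m) t)

def Full (m : ℕ) (x : V →₀ ℕ) (i : Fin 4) (β : Fin 4 → ℕ) : Prop :=
  FullOf m x (Tok x m) i β

lemma tok_S {m : ℕ} {x : V →₀ ℕ} (h : x (S m) ≠ 0) (t : ℕ) :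
    Tok x m t ↔ TokS m x ∧ t = en m := by
  cases m with
  | zero => simp [Tok, TokF, h]
  | succ m => simp [Tok, TokF, h]

lemma tok_F {m : ℕ} {x : V →₀ ℕ} (h : x (F m) ≠ 0) (t : ℕ) :
    Tok x m t ↔ TokF m x ∧ t = 0 := by
  cases m with
  | zero => simp [Tok, TokS, h]
  | succ m => simp [Tok, TokS, h]

lemma tok_Q {m : ℕ} {x : V →₀ ℕ} {j : Fin 4} (h : x (Q j (m+1)) ≠ 0) (t : ℕ) :
    Tok x (m+1) t ↔ x (S (m+1)) = 0 ∧ x (F (m+1)) = 0 ∧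
        (∀ k, x (Q k (m+1)) = if k = j then 1 else 0) ∧
          ∃ β, Full m x j β ∧ Con j β (en m) t := by
  constructor
  · rintro (⟨h1, -⟩ | ⟨h1, -⟩ | ⟨h1, h2, j', hj, h3⟩)
    · exact absurd (h1.2.2.1 j) h
    · exact absurd (h1.2.2.1 j) h
    · have : j = j' := by
        by_contra hne
        exact h (by rw [hj, if_neg hne])
      subst this
      exact ⟨h1, h2, hj, h3⟩
  · rintro ⟨h1, h2, hj, h3⟩
    exact Or.inr (Or.inr ⟨h1, h2, j, hj, h3⟩)

/-- common part of the state of level `m+1` when level `m` is at `s` or `f`. -/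
def Base (m : ℕ) (x : V →₀ ℕ) (j : Fin 4) : Prop :=
  x (S (m+1)) = 0 ∧ x (F (m+1)) = 0 ∧
        (∀ k, x (Q k (m+1)) = if k = j then 1 else 0) ∧
        (∀ k, x (C k m) = if k = j then 1 else 0)

lemma tok_QS {m : ℕ} {x : V →₀ ℕ} (j : Fin 4) (h : x (Q j (m+1)) ≠ 0) (hS : x (S m) ≠ 0) (t : ℕ) :
    Tok x (m+1) t ↔ Base m x j ∧ TokS m x ∧
      Con j (fun k => x (B k m) + if k = j then en m else 0) (en m) t := by
  rw [tok_Q h]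
  constructor
  · rintro ⟨h1, h2, h3, β, ⟨h4, t', h5, h6⟩, h7⟩
    rw [tok_S hS] at h5
    obtain ⟨h5, rfl⟩ := h5
    rw [funext h6] at h7
    exact ⟨⟨h1, h2, h3, h4⟩, h5, h7⟩
  · rintro ⟨⟨h1, h2, h3, h4⟩, h5, h7⟩
    exact ⟨h1, h2, h3, _, ⟨h4, en m, (tok_S hS _).2 ⟨h5, rfl⟩, fun k => rfl⟩, h7⟩

lemma tok_QF {m : ℕ} {x : V →₀ ℕ} (j : Fin 4) (h : x (Q j (m+1)) ≠ 0) (hS : x (F m) ≠ 0) (t : ℕ) :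
    Tok x (m+1) t ↔ Base m x j ∧ TokF m x ∧
      Con j (fun k => x (B k m)) (en m) t := by
  rw [tok_Q h]
  constructor
  · rintro ⟨h1, h2, h3, β, ⟨h4, t', h5, h6⟩, h7⟩
    rw [tok_F hS] at h5
    obtain ⟨h5, rfl⟩ := h5
    rw [funext h6] at h7
    exact ⟨⟨h1, h2, h3, h4⟩, h5, by simpa using h7⟩
  · rintro ⟨⟨h1, h2, h3, h4⟩, h5, h7⟩
    exact ⟨h1, h2, h3, _, ⟨h4, 0, (tok_F hS _).2 ⟨h5, rfl⟩, fun k => rfl⟩, by simpa using h7⟩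

/-- `x` and `y` agree on all levelled variables of level `> m`. -/
def Agree (m : ℕ) (x y : V →₀ ℕ) : Prop :=
  ∀ k, m < k → x (S k) = y (S k) ∧ x (F k) = y (F k) ∧ (∀ j, x (Q j k) = y (Q j k)) ∧
    (∀ j, x (C j k) = y (C j k)) ∧ (∀ j, x (B j k) = y (B j k))

lemma full_congr {m : ℕ} {x y : V →₀ ℕ} (ht : ∀ t, Tok x m t ↔ Tok y m t)
    (hC : ∀ j, x (C j m) = y (C j m)) (hB : ∀ j, x (B j m) = y (B j m)) (i : Fin 4)
    (β : Fin 4 → ℕ) : Full m x i β ↔ Full m y i β := by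
  simp only [Full, FullOf, ht, hC, hB]

lemma full_up {k : ℕ} {x y : V →₀ ℕ} (hx : ¬ Low (k+1) x) (hy : ¬ Low (k+1) y)
    (ha : Agree k x y) (h : ∀ i β, Full k x i β ↔ Full k y i β) :
    ∀ m, k ≤ m → ∀ i β, Full m x i β ↔ Full m y i β := by
  intro m hm
  induction m, hm using Nat.le_induction with
  | base => exact h
  | succ m hm ih =>
    obtain ⟨h1, h2, h3, h4, h5⟩ := ha (m+1) (by omega)
    have lx : ¬ Low (m+1) x := fun hl => hx fun i hi => hl i (by omega)
    have ly : ¬ Low (m+1) y := fun hl => hy fun i hi => hl i (by omega)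
    apply full_congr _ h4 h5
    intro t
    have ih' : ∀ i β, FullOf m x (fun t' => Tok x m t') i β ↔
      FullOf m y (fun t' => Tok y m t') i β := ih
    simp only [Tok, TokS, TokF, lx, ly, h1, h2, h3, ih']

lemma low_congr {m : ℕ} {x y : V →₀ ℕ}
    (h : ∀ k < m, x (S k) = y (S k) ∧ x (F k) = y (F k) ∧ (∀ j, x (Q j k) = y (Q j k)) ∧
    (∀ j, x (C j k) = y (C j k)) ∧ (∀ j, x (B j k) = y (B j k))) : Low m x ↔ Low m y := by
  unfold Low
  refine forall₂_congr fun k hk => ?_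
  obtain ⟨h1, h2, h3, h4, h5⟩ := h k hk
  simp only [h1, h2, h3, h4, h5]

lemma en_succ (m : ℕ) : en (m+1) = en m * en m := by
  simp only [en, pow_succ, pow_mul]; ring

lemma en_pos (m : ℕ) : 0 < en m := by simp [en]

/-- A rule: two exponent vectors. -/
def Inv (J : (V →₀ ℕ) → Prop) (u v : V →₀ ℕ) : Prop := ∀ w, J (u + w) ↔ J (v + w)

noncomputable abbrev σ (v : V) : V →₀ ℕ := Finsupp.single v 1

section rules
variable (m : ℕ) (w : V →₀ ℕ) (t : ℕ)

lemma low_σ (v : V) (hv : ∀ k < m, v ≠ S k ∧ v ≠ F k ∧ (∀ j, v ≠ Q j k) ∧ (∀ j, v ≠ C j k) ∧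
    (∀ j, v ≠ B j k)) : Low m (σ v + w) ↔ Low m w := by
  apply low_congr
  intro k hk
  obtain ⟨h1, h2, h3, h4, h5⟩ := hv k hk
  simp [Finsupp.single_apply, h1, h2, h3, h4, h5]

lemma low_S (k) (h : m ≤ k) : Low m (σ (S k) + w) ↔ Low m w :=
  low_σ m w _ (fun i hi => by simp; omega)
lemma low_F (k) (h : m ≤ k) : Low m (σ (F k) + w) ↔ Low m w :=
  low_σ m w _ (fun i hi => by simp; omega)
lemma low_Q (j k) (h : m ≤ k) : Low m (σ (Q j k) + w) ↔ Low m w :=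
  low_σ m w _ (fun i hi => by simp; omega)
lemma low_C (j k) (h : m ≤ k) : Low m (σ (C j k) + w) ↔ Low m w :=
  low_σ m w _ (fun i hi => by simp; omega)
lemma low_B (j k) (h : m ≤ k) : Low m (σ (B j k) + w) ↔ Low m w :=
  low_σ m w _ (fun i hi => by simp; omega)

lemma rule1 : Tok (σ (Q 0 (m+1)) + (σ (C 0 m) + (σ (S m) + w))) (m+1) t ↔
    Tok (σ (S (m+1)) + w) (m+1) t := by
  rw [tok_QS 0 (by simp) (by simp), tok_S (by simp)]
  have hl : Low (m+1) (σ (S (m+1)) + w) ↔ Low m w ∧ w (S m) = 0 ∧ w (F m) = 0 ∧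
    (∀ j, w (Q j m) = 0) ∧ (∀ j, w (C j m) = 0) ∧ (∀ j, w (B j m) = 0) := by
    rw [low_S _ _ _ le_rfl]
    constructor
    · intro h
      exact ⟨fun k hk => h k (by omega), h m (by omega)⟩
    · rintro ⟨h1, h2⟩ k hk
      rcases Nat.lt_succ_iff_lt_or_eq.1 hk with hk | rfl
      · exact h1 k hk
      · exact h2
  have he := en_succ m
  simp [Base, TokS, hl, low_S, low_Q, low_C, Con, Fin.forall_fin_succ, Finsupp.single_apply]
  constructor
  · rintro ⟨_, _, h0, h⟩
    have h1 : w (B 0 m) = 0 := by omega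
    simp_all
  · intro _
    simp_all

lemma rule2 : Tok (σ (Q 1 (m+1)) + (σ (C 1 m) + (σ (S m) + w))) (m+1) t ↔
    Tok (σ (Q 0 (m+1)) + (σ (B 0 m) + (σ (C 0 m) + (σ (F m) + w)))) (m+1) t := by
  rw [tok_QS 1 (by simp) (by simp), tok_QF 0 (by simp) (by simp)]
  simp [Base, TokS, TokF, low_S, low_F, low_Q, low_C, low_B, Con, Fin.forall_fin_succ,
    Finsupp.single_apply, Nat.mul_add]
  try grind

lemma rule3 : Tok (σ (Q 2 (m+1)) + (σ (C 2 m) + (σ (F m) + w))) (m+1) t ↔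
    Tok (σ (Q 1 (m+1)) + (σ (C 1 m) + (σ (F m) + w))) (m+1) t := by
  rw [tok_QF 2 (by simp) (by simp), tok_QF 1 (by simp) (by simp)]
  simp [Base, TokS, TokF, low_S, low_F, low_Q, low_C, low_B, Con, Fin.forall_fin_succ,
    Finsupp.single_apply, Nat.mul_add]
  try grind

lemma rule4 : Tok (σ (Q 2 (m+1)) + (σ (B 0 m) + (σ (C 2 m) + (σ (S m) + w)))) (m+1) t ↔
    Tok (σ (Q 1 (m+1)) + (σ (B 3 m) + (σ (C 1 m) + (σ (S m) + w)))) (m+1) t := by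
  rw [tok_QS 2 (by simp) (by simp), tok_QS 1 (by simp) (by simp)]
  simp [Base, TokS, TokF, low_S, low_F, low_Q, low_C, low_B, Con, Fin.forall_fin_succ,
    Finsupp.single_apply, Nat.mul_add]
  try grind

lemma rule5 : Tok (σ (Q 3 (m+1)) + (σ (B 3 m) + (σ (C 3 m) + (σ (F m) + w)))) (m+1) t ↔
    Tok (σ (Q 2 (m+1)) + (σ (C 2 m) + (σ (S m) + w))) (m+1) t := by
  rw [tok_QF 3 (by simp) (by simp), tok_QS 2 (by simp) (by simp)]
  simp [Base, TokS, TokF, low_S, low_F, low_Q, low_C, low_B, Con, Fin.forall_fin_succ,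
    Finsupp.single_apply, Nat.mul_add]
  try grind

lemma low_succ : Low (m+1) w ↔ Low m w ∧ w (S m) = 0 ∧ w (F m) = 0 ∧
    (∀ j, w (Q j m) = 0) ∧ (∀ j, w (C j m) = 0) ∧ (∀ j, w (B j m) = 0) := by
  constructor
  · intro h
    exact ⟨fun k hk => h k (by omega), h m (by omega)⟩
  · rintro ⟨h1, h2⟩ k hk
    rcases Nat.lt_succ_iff_lt_or_eq.1 hk with hk | rfl
    · exact h1 k hk
    · exact h2

lemma rule6 : Tok (σ (Q 3 (m+1)) + (σ (C 3 m) + (σ (S m) + w))) (m+1) t ↔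
    Tok (σ (F (m+1)) + w) (m+1) t := by
  rw [tok_QS 3 (by simp) (by simp), tok_F (by simp)]
  simp [Base, TokS, TokF, low_succ, low_F, low_S, low_Q, low_C, Con, Fin.forall_fin_succ,
    Finsupp.single_apply]
  constructor
  · rintro ⟨_, _, h0, h⟩
    have h1 : w (B 0 m) = 0 := by omega
    simp_all
  · intro _
    simp_all

lemma rule7 (j i : Fin 4) (β : Fin 4 → ℕ) :
    Full (m+1) (σ (Q 1 (m+1)) + (σ (B 2 m) + (σ (B j (m+1)) + (σ (C j (m+1)) + (σ (F m) + w)))))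
      i β ↔
    Full (m+1) (σ (Q 1 (m+1)) + (σ (B 1 m) + (σ (C j (m+1)) + (σ (F m) + w)))) i β := by
  by_cases hij : j = i
  · subst hij
    unfold Full FullOf
    simp only [tok_QF 1 (show (σ (Q 1 (m+1)) + (σ (B 2 m) + (σ (B j (m+1)) + (σ (C j (m+1)) +
      (σ (F m) + w))))) (Q 1 (m+1)) ≠ 0 by simp) (by simp),
      tok_QF 1 (show (σ (Q 1 (m+1)) + (σ (B 1 m) + (σ (C j (m+1)) +
      (σ (F m) + w)))) (Q 1 (m+1)) ≠ 0 by simp) (by simp)]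
    simp [Base, TokS, TokF, low_S, low_F, low_Q, low_C, low_B, Con, 
      Finsupp.single_apply]
    intro hc
    constructor
    · rintro ⟨h, hb⟩
      refine ⟨by grind, fun k => ?_⟩
      have := hb k
      grind
    · rintro ⟨h, hb⟩
      refine ⟨by grind, fun k => ?_⟩
      have := hb k
      grind
  · unfold Full FullOf
    constructor
    · rintro ⟨h, -⟩
      have := h j
      simp [hij] at this
    · rintro ⟨h, -⟩
      have := h j
      simp [hij] at this

lemma rule0 (j i : Fin 4) (β : Fin 4 → ℕ) :
    Full 0 (σ (B j 0) + (σ (B j 0) + (σ (C j 0) + (σ (F 0) + w)))) i β ↔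
    Full 0 (σ (C j 0) + (σ (S 0) + w)) i β := by
  by_cases hij : j = i
  · subst hij
    unfold Full FullOf
    simp only [tok_F (show (σ (B j 0) + (σ (B j 0) + (σ (C j 0) + (σ (F 0) + w)))) (F 0) ≠ 0 by simp),
      tok_S (show (σ (C j 0) + (σ (S 0) + w)) (S 0) ≠ 0 by simp)]
    simp [TokS, TokF, Low, en, Finsupp.single_apply]
    intro hc _ _ _
    refine forall_congr' fun k => ?_
    grind
  · unfold Full FullOf
    constructor
    · rintro ⟨h, -⟩
      have := h j
      simp [hij] at this
    · rintro ⟨h, -⟩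
      have := h j
      simp [hij] at this

end rules

/-- the invariant -/
def J (n K : ℕ) (x : V →₀ ℕ) : Prop :=
  x T = 0 ∧ ((x l = 1 ∧ (∀ j, x (C j n) = 0) ∧ x (S n) = 0 ∧ x (F n) = 0 ∧ (∀ j, x (Q j n) = 0) ∧
    Low n x ∧ x (B 3 n) + x c = K) ∨ (x l = 0 ∧ ∃ β, Full n x 3 β ∧ β 3 + x c = K))

def HasTok (k : ℕ) (x : V →₀ ℕ) : Prop := ∃ i ≤ k, x (S i) ≠ 0 ∨ x (F i) ≠ 0

lemma HasTok.not_low {k : ℕ} {x : V →₀ ℕ} (h : HasTok k x) : ¬ Low (k+1) x := by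
  obtain ⟨i, hi, h⟩ := h
  intro hl
  have := hl i (by omega)
  tauto

lemma J_rule {n K k : ℕ} {x y : V →₀ ℕ} (hk : k ≤ n) (hT : x T = y T) (hl : x l = y l)
    (hc : x c = y c) (hx : HasTok k x) (hy : HasTok k y) (ha : Agree k x y)
    (h : ∀ i β, Full k x i β ↔ Full k y i β) : J n K x ↔ J n K y := by
  have h1 := full_up hx.not_low hy.not_low ha h n hk
  have key : ∀ z : V →₀ ℕ, HasTok k z → ¬ (z (S n) = 0 ∧ z (F n) = 0 ∧ (∀ j, z (Q j n) = 0) ∧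
    Low n z ∧ z (B 3 n) + z c = K) := by
    rintro z ⟨i, hi, hz⟩ ⟨h1, h2, -, h3, -⟩
    rcases (hi.trans hk).lt_or_eq with hi | rfl
    · have := h3 i hi
      tauto
    · tauto
  simp only [J, key x hx, key y hy, and_false, false_or]
  simp only [hT, hl, hc, h1]

lemma J_tok {n K m : ℕ} {x y : V →₀ ℕ} (hk : m + 1 ≤ n) (hT : x T = y T) (hl : x l = y l)
    (hc : x c = y c) (hx : HasTok (m+1) x) (hy : HasTok (m+1) y) (ha : Agree (m+1) x y)
    (hC : ∀ j, x (C j (m+1)) = y (C j (m+1))) (hB : ∀ j, x (B j (m+1)) = y (B j (m+1)))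
    (h : ∀ t, Tok x (m+1) t ↔ Tok y (m+1) t) : J n K x ↔ J n K y :=
  J_rule hk hT hl hc hx hy ha (full_congr h hC hB)

lemma not_J_S {n K : ℕ} (hK : K < en n) {x : V →₀ ℕ} (h : x (S n) ≠ 0) : ¬ J n K x := by
  rintro ⟨-, ⟨-, -, h1, -⟩ | ⟨-, β, ⟨h1, t, h2, h3⟩, h4⟩⟩
  · exact h h1
  · rw [tok_S h] at h2
    have := h3 3
    simp at this
    omega

lemma not_J_T {n K : ℕ} {x : V →₀ ℕ} (h : x T ≠ 0) : ¬ J n K x := fun hx => h hx.1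

/-- Abstract version of membership in an ideal generated by binomials. -/
lemma inv_of_mem {τ : Type*} (G : Set (MvPolynomial τ (ZMod 2))) (I : (τ →₀ ℕ) → Prop)
    (hG : ∀ g ∈ G, ∃ u v, g = monomial u 1 + monomial v 1 ∧ ∀ w, I (u + w) ↔ I (v + w))
    (a b : τ →₀ ℕ) (h : (monomial a 1 + monomial b 1 : MvPolynomial τ (ZMod 2)) ∈ Ideal.span G)
    (ha : I a) : I b := by
  classical
  let φ : MvPolynomial τ (ZMod 2) →ₗ[ZMod 2] ZMod 2 :=
    (basisMonomials τ (ZMod 2)).constr (ZMod 2) (fun x => if I x then (1 : ZMod 2) else 0)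
  have hφ : ∀ x, φ (monomial x 1) = if I x then 1 else 0 := by
    intro x
    have := (basisMonomials τ (ZMod 2)).constr_basis (ZMod 2)
      (fun x => if I x then (1 : ZMod 2) else 0) x
    simpa using this
  have key : ∀ p ∈ Ideal.span G, ∀ q, φ (q * p) = 0 := by
    intro p hp
    induction hp using Submodule.span_induction with
    | mem g hg =>
      obtain ⟨u, v, rfl, hI⟩ := hG g hg
      intro q
      induction q using MvPolynomial.induction_on' with
      | monomial w r =>
        have e : (monomial w r : MvPolynomial τ (ZMod 2)) = r • monomial w 1 := by
          simp [smul_monomial]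
        rw [e, smul_mul_assoc, map_smul, mul_add, monomial_mul, monomial_mul, map_add, one_mul,
          hφ, hφ, add_comm w u, add_comm w v]
        simp only [hI w, CharTwo.add_self_eq_zero, smul_zero]
      | add p q hp hq => rw [add_mul, map_add, hp, hq, add_zero]
    | zero => simp
    | add x y _ _ hx hy => intro q; rw [mul_add, map_add, hx, hy, add_zero]
    | smul r x _ hx => intro q; rw [smul_eq_mul, ← mul_assoc]; exact hx _
  have := key _ h 1
  rw [one_mul, map_add, hφ, hφ, if_pos ha] at this
  by_contra hb
  simp [hb] at this

section gens
variable {n K : ℕ}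

/-- the pulled back invariant -/
def JJ (n K : ℕ) (x : MVar n →₀ ℕ) : Prop := J n K (x.mapDomain (emb n))

def Good (I : (MVar n →₀ ℕ) → Prop) (g : MPoly n) : Prop :=
  ∃ u v, g = monomial u 1 + monomial v 1 ∧ ∀ w, I (u + w) ↔ I (v + w)

lemma good_PP_true : ∀ g ∈ PP n true, Good (JJ n K) g := by
  intro g hg
  simp only [PP, P0, Pm, Set.mem_union, Set.mem_iUnion, Set.mem_ofPred_eq, Set.mem_insert_iff,
    Set.mem_singleton_iff] at hg
  rcases hg with ⟨j, rfl⟩ | ⟨i, (rfl | rfl | rfl | rfl | rfl | rfl) | ⟨j, rfl⟩⟩ <;>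
  · refine ⟨_, _, by simp only [X, pow_two, monomial_mul, one_mul]; rfl, fun w => ?_⟩
    refine iff_of_false (not_J_T ?_) (not_J_T ?_) <;>
      simp [Finsupp.mapDomain_add, Finsupp.mapDomain_single, emb]

lemma good_GG (hK : K < en n) : ∀ g ∈ GG n, Good (JJ n K) g := by
  intro g hg
  simp only [GG, Set.mem_insert_iff, Set.mem_singleton_iff] at hg
  rcases hg with rfl | rfl | rfl | rfl | rfl | rfl | rfl <;>
    refine ⟨_, _, by simp only [X, monomial_mul, one_mul]; rfl, fun w => ?_⟩ <;>
    unfold JJ <;>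
    simp only [Finsupp.mapDomain_add, Finsupp.mapDomain_single, emb, add_assoc, Fin.val_last] <;>
    generalize Finsupp.mapDomain (emb n) w = w
  · have hO : Low n (σ O + w) ↔ Low n w := low_σ n w _ (by simp)
    have hc : Low n (σ c + w) ↔ Low n w := low_σ n w _ (by simp)
    have hl : ∀ w, Low n (σ l + w) ↔ Low n w := fun w => low_σ n w _ (by simp)
    simp [J, low_B, hO, hc, hl]
    try grind
  · have hO : Low n (σ O + w) ↔ Low n w := low_σ n w _ (by simp)
    have hc : Low n (σ c + w) ↔ Low n w := low_σ n w _ (by simp)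
    have hl : ∀ w, Low n (σ l + w) ↔ Low n w := fun w => low_σ n w _ (by simp)
    simp [J, low_B, hO, hc, hl]
    try grind
  · have hl : Low n (σ l + w) ↔ Low n w := low_σ n w _ (by simp)
    simp only [J, Full, FullOf, tok_F (show (σ (C 3 n) + (σ (F n) + w)) (F n) ≠ 0 by simp)]
    simp [TokF, low_C, low_F, hl, Fin.forall_fin_succ]
    intro _ _
    constructor
    · rintro ⟨β, h3, h4⟩
      grind
    · intro h
      refine ⟨fun k => w (B k n), ?_⟩
      simp_all
  · exact iff_of_false (not_J_T (by simp)) (not_J_S hK (by simp))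
  · exact iff_of_false (not_J_S hK (by simp)) (not_J_S hK (by simp))
  · exact iff_of_false (not_J_S hK (by simp)) (not_J_S hK (by simp))
  · exact iff_of_false (not_J_T (by simp)) (not_J_T (by simp))

lemma good_PP_false : ∀ g ∈ PP n false, Good (JJ n K) g := by
  intro g hg
  simp only [PP, P0, Pm, Set.mem_union, Set.mem_iUnion, Set.mem_ofPred_eq, Set.mem_insert_iff,
    Set.mem_singleton_iff] at hg
  rcases hg with ⟨j, rfl⟩ | ⟨i, (rfl | rfl | rfl | rfl | rfl | rfl) | ⟨j, rfl⟩⟩ <;>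
    refine ⟨_, _, by simp only [X, pow_two, monomial_mul, one_mul]; rfl, fun w => ?_⟩ <;>
    unfold JJ <;>
    simp only [Finsupp.mapDomain_add, Finsupp.mapDomain_single, emb, add_assoc, Fin.val_succ,
      Fin.val_castSucc, Fin.val_zero] <;>
    generalize Finsupp.mapDomain (emb n) w = w
  · refine J_rule (k := 0) (by omega) ?_ ?_ ?_ ?_ ?_ ?_ (rule0 w j)
    all_goals first
      | simp; done
      | (refine ⟨_, le_rfl, ?_⟩; simp; done)
      | intro k hk
        have h1 : 0 ≠ k := by omega
        simp [h1]
  · refine J_tok i.2 ?_ ?_ ?_ ?_ ?_ ?_ ?_ ?_ (rule1 _ w)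
    all_goals first
      | simp; done
      | (refine ⟨_, le_rfl, ?_⟩; simp; done)
      | (refine ⟨_, Nat.le_succ _, ?_⟩; simp; done)
      | intro k hk
        have h1 : (i : ℕ) ≠ k := by omega
        have h2 : (i : ℕ) + 1 ≠ k := by omega
        simp [h1, h2]
  · refine J_tok i.2 ?_ ?_ ?_ ?_ ?_ ?_ ?_ ?_ (rule2 _ w)
    all_goals first
      | simp; done
      | (refine ⟨_, le_rfl, ?_⟩; simp; done)
      | (refine ⟨_, Nat.le_succ _, ?_⟩; simp; done)
      | intro k hk
        have h1 : (i : ℕ) ≠ k := by omega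
        have h2 : (i : ℕ) + 1 ≠ k := by omega
        simp [h1, h2]
  · refine J_tok i.2 ?_ ?_ ?_ ?_ ?_ ?_ ?_ ?_ (rule3 _ w)
    all_goals first
      | simp; done
      | (refine ⟨_, le_rfl, ?_⟩; simp; done)
      | (refine ⟨_, Nat.le_succ _, ?_⟩; simp; done)
      | intro k hk
        have h1 : (i : ℕ) ≠ k := by omega
        have h2 : (i : ℕ) + 1 ≠ k := by omega
        simp [h1, h2]
  · refine J_tok i.2 ?_ ?_ ?_ ?_ ?_ ?_ ?_ ?_ (rule4 _ w)
    all_goals first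
      | simp; done
      | (refine ⟨_, le_rfl, ?_⟩; simp; done)
      | (refine ⟨_, Nat.le_succ _, ?_⟩; simp; done)
      | intro k hk
        have h1 : (i : ℕ) ≠ k := by omega
        have h2 : (i : ℕ) + 1 ≠ k := by omega
        simp [h1, h2]
  · refine J_tok i.2 ?_ ?_ ?_ ?_ ?_ ?_ ?_ ?_ (rule5 _ w)
    all_goals first
      | simp; done
      | (refine ⟨_, le_rfl, ?_⟩; simp; done)
      | (refine ⟨_, Nat.le_succ _, ?_⟩; simp; done)
      | intro k hk
        have h1 : (i : ℕ) ≠ k := by omega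
        have h2 : (i : ℕ) + 1 ≠ k := by omega
        simp [h1, h2]
  · refine J_tok i.2 ?_ ?_ ?_ ?_ ?_ ?_ ?_ ?_ (rule6 _ w)
    all_goals first
      | simp; done
      | (refine ⟨_, le_rfl, ?_⟩; simp; done)
      | (refine ⟨_, Nat.le_succ _, ?_⟩; simp; done)
      | intro k hk
        have h1 : (i : ℕ) ≠ k := by omega
        have h2 : (i : ℕ) + 1 ≠ k := by omega
        simp [h1, h2]
  · refine J_rule i.2 ?_ ?_ ?_ ?_ ?_ ?_ (rule7 _ w j)
    all_goals first
      | simp; done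
      | (refine ⟨_, le_rfl, ?_⟩; simp; done)
      | (refine ⟨_, Nat.le_succ _, ?_⟩; simp; done)
      | intro k hk
        have h1 : (i : ℕ) ≠ k := by omega
        have h2 : (i : ℕ) + 1 ≠ k := by omega
        simp [h1, h2]

/-- no token at all -/
def NT (n : ℕ) (x : MVar n →₀ ℕ) : Prop :=
  x.mapDomain (emb n) T = 0 ∧ x.mapDomain (emb n) l = 0 ∧
    ∀ k, x.mapDomain (emb n) (S k) = 0 ∧ x.mapDomain (emb n) (F k) = 0

lemma nt_T {x : MVar n →₀ ℕ} (h : x.mapDomain (emb n) T ≠ 0) : ¬ NT n x := fun hx => h hx.1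
lemma nt_l {x : MVar n →₀ ℕ} (h : x.mapDomain (emb n) l ≠ 0) : ¬ NT n x := fun hx => h hx.2.1
lemma nt_S (k : ℕ) {x : MVar n →₀ ℕ} (h : x.mapDomain (emb n) (S k) ≠ 0) : ¬ NT n x :=
  fun hx => h (hx.2.2 k).1
lemma nt_F (k : ℕ) {x : MVar n →₀ ℕ} (h : x.mapDomain (emb n) (F k) ≠ 0) : ¬ NT n x :=
  fun hx => h (hx.2.2 k).2

lemma nt_PP (bar : Bool) : ∀ g ∈ PP n bar, Good (NT n) g := by
  intro g hg
  simp only [PP, P0, Pm, Set.mem_union, Set.mem_iUnion, Set.mem_ofPred_eq, Set.mem_insert_iff,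
    Set.mem_singleton_iff] at hg
  rcases hg with ⟨j, rfl⟩ | ⟨i, (rfl | rfl | rfl | rfl | rfl | rfl) | ⟨j, rfl⟩⟩
  · refine ⟨_, _, by simp only [X, pow_two, monomial_mul, one_mul]; rfl, fun w => ?_⟩
    refine iff_of_false ?_ ?_ <;> cases bar <;> first
      | (refine nt_T ?_; simp [Finsupp.mapDomain_add, Finsupp.mapDomain_single, emb]; done)
      | (refine nt_S 0 ?_; simp [Finsupp.mapDomain_add, Finsupp.mapDomain_single, emb]; done)
      | (refine nt_F 0 ?_; simp [Finsupp.mapDomain_add, Finsupp.mapDomain_single, emb]; done)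
  all_goals
    refine ⟨_, _, by simp only [X, pow_two, monomial_mul, one_mul]; rfl, fun w => ?_⟩
    refine iff_of_false ?_ ?_ <;> cases bar <;> first
      | (refine nt_T ?_; simp [Finsupp.mapDomain_add, Finsupp.mapDomain_single, emb]; done)
      | (refine nt_S i ?_; simp [Finsupp.mapDomain_add, Finsupp.mapDomain_single, emb]; done)
      | (refine nt_F i ?_; simp [Finsupp.mapDomain_add, Finsupp.mapDomain_single, emb]; done)
      | (refine nt_S (i+1) ?_; simp [Finsupp.mapDomain_add, Finsupp.mapDomain_single, emb]; done)
      | (refine nt_F (i+1) ?_; simp [Finsupp.mapDomain_add, Finsupp.mapDomain_single, emb]; done)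

lemma nt_GG : ∀ g ∈ GG n, Good (NT n) g := by
  intro g hg
  simp only [GG, Set.mem_insert_iff, Set.mem_singleton_iff] at hg
  rcases hg with rfl | rfl | rfl | rfl | rfl | rfl | rfl <;>
    refine ⟨_, _, by simp only [X, monomial_mul, one_mul]; rfl, fun w => ?_⟩ <;>
    refine iff_of_false ?_ ?_ <;> first
      | (refine nt_T ?_; simp [Finsupp.mapDomain_add, Finsupp.mapDomain_single, emb]; done)
      | (refine nt_l ?_; simp [Finsupp.mapDomain_add, Finsupp.mapDomain_single, emb]; done)
      | (refine nt_S n ?_; simp [Finsupp.mapDomain_add, Finsupp.mapDomain_single, emb]; done)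
      | (refine nt_F n ?_; simp [Finsupp.mapDomain_add, Finsupp.mapDomain_single, emb]; done)

end gens
end MM

open MVar in
/-- For `α ∈ D` and any monomial `γ` with `α + γ ∈ ⟨𝓕⟩`, the monomial
`c_{4n} s_n` does not divide `γ`. -/
theorem stmt12 (n : ℕ) (α : Mon (MVar n)) (hα : α ∈ Dmon n) (γ : Mon (MVar n))
    (h : (monomial α 1 + monomial γ 1 : MPoly n) ∈ Ideal.span (FF n)) :
    ¬ (Finsupp.single (vC false 3 (Fin.last n)) 1
        + Finsupp.single (vS false (Fin.last n)) 1 ≤ γ) := by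
  intro hγ
  obtain ⟨δ, rfl⟩ := exists_add_of_le hγ
  obtain ⟨j, m1, m2, hj, hle, rfl⟩ := hα
  have hS : (Finsupp.single (vC false 3 (Fin.last n)) 1 + Finsupp.single (vS false (Fin.last n)) 1
      + δ : MVar n →₀ ℕ).mapDomain (MM.emb n) (MM.V.S n) ≠ 0 := by
    simp [Finsupp.mapDomain_add, Finsupp.mapDomain_single, MM.emb]
  rcases Nat.le_one_iff_eq_zero_or_eq_one.1 hj with rfl | rfl
  · refine MM.nt_S n hS (MM.inv_of_mem _ (MM.NT n) ?_ _ _ h ?_)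
    · rintro g ((hg | hg) | hg)
      · exact MM.nt_PP _ g hg
      · exact MM.nt_PP _ g hg
      · exact MM.nt_GG g hg
    · simp [MM.NT, Finsupp.mapDomain_add, Finsupp.mapDomain_single, MM.emb]
  · have hK : m1 + m2 < en n := by omega
    refine MM.not_J_S hK hS (MM.inv_of_mem _ (MM.JJ n (m1 + m2)) ?_ _ _ h ?_)
    · rintro g ((hg | hg) | hg)
      · exact MM.good_PP_false g hg
      · exact MM.good_PP_true g hg
      · exact MM.good_GG hK g hg
    · simp [MM.JJ, MM.J, MM.Low, Finsupp.mapDomain_add, Finsupp.mapDomain_single, MM.emb]
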